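/- arXiv:2208.00851 — 2 statements merged into one kernel-verified Lean document; each statement's English description precedes it below -/
import Mathlib

section
/- For all real x and y: if x = qπ for some integer q, then J(x,y) = c1·K·cos(y); and if x is not of the form qπ (q ∈ ℤ), then J(x,y) = c1·f1(x)·cos(y − (K−1)x) − c2·f2(x)·sin(y − (K−1)x). -/
open Real

/-- `f1(x) = sin(Kx)/sin(x)`. -/
noncomputable def f1 (K : ℕ) (x : ℝ) : ℝ := Real.sin (K * x) / Real.sin x

/-- `f2(x) = K·cos(Kx)/sin(x) − sin(Kx)·cos(x)/sin(x)²`. -/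
noncomputable def f2 (K : ℕ) (x : ℝ) : ℝ :=
  (K : ℝ) * Real.cos (K * x) / Real.sin x -
    Real.sin (K * x) * Real.cos x / (Real.sin x) ^ 2

/-- `J(x,y) = Σ_{k=0}^{K−1} (b + a·k·T)·cos(y − 2xk)`. -/
noncomputable def Jfun (K : ℕ) (T b a x y : ℝ) : ℝ :=
  ∑ k ∈ Finset.range K, (b + a * k * T) * Real.cos (y - 2 * x * k)

/-!
Away from the multiples of `π`, the unweighted sum `∑ cos (y - 2xk)` is the real part of a geometric
sum and equals `f1 x * cos (y - (K - 1)x)`. Since `f2 = f1'`, differentiating this identity in `x`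
gives a closed form of `∑ 2k sin (y - 2xk)`, and the shift `y ↦ y + π / 2` turns it into one of
`∑ 2k cos (y - 2xk)`. The sum `J` is a combination of the two cosine sums.
-/

theorem sum_range_add_mul_natCast {F : Type*} [Field F] [NeZero (2 : F)] (b d : F) (n : ℕ) :
    ∑ k ∈ Finset.range n, (b + d * k) = (b + d * (n - 1) / 2) * n := by
  induction n with
  | zero => simp
  | succ n ih =>
    rw [Finset.sum_range_succ, ih]
    push_cast
    field_simp
    ring

theorem cos_sub_two_mul_int_mul_pi_mul_natCast (y : ℝ) (q : ℤ) (k : ℕ) :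
    cos (y - 2 * (q * π) * k) = cos y := by
  rw [← cos_sub_int_mul_two_pi y (q * k)]
  push_cast
  ring_nf

section

variable {K : ℕ} {x : ℝ}

theorem sum_range_cos_sub (hx : sin x ≠ 0) (y : ℝ) :
    ∑ k ∈ Finset.range K, cos (y - 2 * x * k) = f1 K x * cos (y - (K - 1) * x) := by
  have cos_reflect (z : ℝ) : cos (y - z) = cos (z + -y) := by
    rw [← cos_neg, neg_sub, sub_eq_add_neg]
  rw [f1, div_mul_eq_mul_div, eq_div_iff hx, mul_comm]
  simp only [cos_reflect]
  convert sin_mul_sum_cos K (2 * x) (-y) using 3 <;> ring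

theorem hasDerivAt_f1 (hx : sin x ≠ 0) : HasDerivAt (f1 K) (f2 K x) x := by
  have numerator : HasDerivAt (fun t ↦ sin (K * t)) (cos (K * x) * K) x :=
    ((hasDerivAt_id' x).const_mul (K : ℝ)).sin.congr_deriv (by ring)
  refine (numerator.div (hasDerivAt_sin x) hx).congr_deriv ?_
  rw [f2]
  field_simp

theorem sum_range_two_mul_natCast_mul_sin_sub (hx : sin x ≠ 0) (y : ℝ) :
    ∑ k ∈ Finset.range K, 2 * k * sin (y - 2 * x * k) =
      f2 K x * cos (y - (K - 1) * x) + (K - 1) * f1 K x * sin (y - (K - 1) * x) := by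
  have deriv_phase (c : ℝ) : HasDerivAt (fun t ↦ y - c * t) (-c) x := by
    simpa using ((hasDerivAt_id' x).const_mul c).const_sub y
  have deriv_sum : HasDerivAt (fun t ↦ ∑ k ∈ Finset.range K, cos (y - 2 * t * k))
      (∑ k ∈ Finset.range K, 2 * k * sin (y - 2 * x * k)) x := by
    refine HasDerivAt.fun_sum fun k _ ↦ ?_
    simp only [mul_right_comm (2 : ℝ) _ (k : ℝ)]
    exact (deriv_phase (2 * k)).cos.congr_deriv (by ring)
  have deriv_closed_form : HasDerivAt (fun t ↦ f1 K t * cos (y - (K - 1) * t))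
      (f2 K x * cos (y - (K - 1) * x) + (K - 1) * f1 K x * sin (y - (K - 1) * x)) x :=
    ((hasDerivAt_f1 hx).fun_mul (deriv_phase (K - 1)).cos).congr_deriv (by ring)
  have eventually_eq : (fun t ↦ ∑ k ∈ Finset.range K, cos (y - 2 * t * k)) =ᶠ[nhds x]
      fun t ↦ f1 K t * cos (y - (K - 1) * t) := by
    filter_upwards [continuous_sin.continuousAt.eventually_ne hx] with t ht
    exact sum_range_cos_sub ht y
  exact deriv_sum.unique (deriv_closed_form.congr_of_eventuallyEq eventually_eq)

theorem sum_range_two_mul_natCast_mul_cos_sub (hx : sin x ≠ 0) (y : ℝ) :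
    ∑ k ∈ Finset.range K, 2 * k * cos (y - 2 * x * k) =
      (K - 1) * f1 K x * cos (y - (K - 1) * x) - f2 K x * sin (y - (K - 1) * x) := by
  have shifted := sum_range_two_mul_natCast_mul_sin_sub (K := K) hx (y + π / 2)
  simp only [add_sub_right_comm, sin_add_pi_div_two, cos_add_pi_div_two] at shifted
  rw [shifted]
  ring

theorem Jfun_int_mul_pi (K : ℕ) (T b a : ℝ) (q : ℤ) (y : ℝ) :
    Jfun K T b a (q * π) y = (b + a * T * (K - 1) / 2) * K * cos y := by
  simp only [Jfun, cos_sub_two_mul_int_mul_pi_mul_natCast, ← Finset.sum_mul, mul_right_comm a _ T,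
    sum_range_add_mul_natCast]

theorem Jfun_eq_of_sin_ne_zero (T b a : ℝ) (hx : sin x ≠ 0) (y : ℝ) :
    Jfun K T b a x y = (b + a * T * (K - 1) / 2) * f1 K x * cos (y - (K - 1) * x) -
      a * T / 2 * f2 K x * sin (y - (K - 1) * x) := calc
  _ = b * ∑ k ∈ Finset.range K, cos (y - 2 * x * k) +
        a * T / 2 * ∑ k ∈ Finset.range K, 2 * k * cos (y - 2 * x * k) := by
    rw [Jfun, Finset.mul_sum, Finset.mul_sum, ← Finset.sum_add_distrib]
    exact Finset.sum_congr rfl fun k _ ↦ by ring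
  _ = _ := by
    rw [sum_range_cos_sub hx, sum_range_two_mul_natCast_mul_cos_sub hx]
    ring

end

theorem stmt_14 (K : ℕ) (hK : 2 ≤ K) (T b a : ℝ) (hT : 0 < T) (hb : 0 < b)
    (x y : ℝ) :
    ((∃ q : ℤ, x = q * π) →
      Jfun K T b a x y = (b + a * T * ((K : ℝ) - 1) / 2) * K * Real.cos y) ∧
    ((¬ ∃ q : ℤ, x = q * π) →
      Jfun K T b a x y =
        (b + a * T * ((K : ℝ) - 1) / 2) * f1 K x * Real.cos (y - ((K : ℝ) - 1) * x) -
          (a * T / 2) * f2 K x * Real.sin (y - ((K : ℝ) - 1) * x)) := by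
  constructor
  · rintro ⟨q, rfl⟩
    exact Jfun_int_mul_pi K T b a q y
  · intro hx
    have sin_ne_zero : sin x ≠ 0 := fun sin_eq_zero ↦
      let ⟨q, hq⟩ := sin_eq_zero_iff.mp sin_eq_zero
      hx ⟨q, hq.symm⟩
    exact Jfun_eq_of_sin_ne_zero T b a sin_ne_zero y
end

section
/- Assume a ≠ 0 and let A* = {q·2π/(K·T) : q = 1, 2, …, K−1}. Then for every α ∈ A*, L(α·T/2) = |c2/(c1·sin(α·T/2))|, and the set of minimizers of the map α ↦ L(α·T/2) over A* equals the set of minimizers of the map α ↦ |α·T/2 − π/2| over A*. -/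
open Real

/-- The loss function `L(x) = −inf_{y ∈ [0,2π)} J(x,y)/(c1·K)`, with
`c1 = b + a·T·(K−1)/2`. -/
noncomputable def Lfun (K : ℕ) (T b a x : ℝ) : ℝ :=
  -sInf ((fun y => Jfun K T b a x y) '' Set.Ico 0 (2 * π)) /
    ((b + a * T * ((K : ℝ) - 1) / 2) * K)

/-- The set `A* = {q·2π/(K·T) : q ∈ ℤ, 1 ≤ q ≤ K−1}`. -/
def Astar (K : ℕ) (T : ℝ) : Set ℝ :=
  {α | ∃ q : ℤ, 1 ≤ q ∧ q ≤ (K : ℤ) - 1 ∧ α = q * (2 * π) / (K * T)}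

/-!
With `z = exp (-2ix)`, `J(x, y)` is the real part of `exp (iy) * ∑ (b + akT) z ^ k`. For
`x = αT/2` with `α ∈ A*`, the number `z` is a nontrivial `K`-th root of unity, so `∑ z ^ k = 0`
and `∑ k z ^ k = K / (z - 1)`. Hence `J(x, ·)` is a pure sinusoid of amplitude
`|a T K / (2 sin x)|`, and its infimum is minus that amplitude. The loss is therefore a positive
multiple of `1 / sin x`, and `sin x = cos (x - π / 2)` decreases with the distance from `x`
to `π / 2`.
-/

section RootOfUnitySums

theorem sum_range_natCast_mul_pow_mul_sub_one {R : Type*} [CommRing R] (z : R) (n : ℕ) :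
    (∑ k ∈ Finset.range n, (k : R) * z ^ k) * (z - 1) =
      n * z ^ n - z * ∑ k ∈ Finset.range n, z ^ k := by
  induction n with
  | zero => simp
  | succ n ih =>
    rw [Finset.sum_range_succ, Finset.sum_range_succ, add_mul, ih]
    push_cast
    ring

variable {F : Type*} [Field F] {z : F} {n : ℕ}

theorem sum_range_pow_eq_zero_of_pow_eq_one (hz : z ≠ 1) (hzn : z ^ n = 1) :
    ∑ k ∈ Finset.range n, z ^ k = 0 := by
  rw [geom_sum_eq hz, hzn, sub_self, zero_div]

theorem sum_range_natCast_mul_pow_of_pow_eq_one (hz : z ≠ 1) (hzn : z ^ n = 1) :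
    ∑ k ∈ Finset.range n, (k : F) * z ^ k = n / (z - 1) := by
  rw [eq_div_iff (sub_ne_zero.2 hz), sum_range_natCast_mul_pow_mul_sub_one,
    sum_range_pow_eq_zero_of_pow_eq_one hz hzn, hzn, mul_one, mul_zero, sub_zero]

end RootOfUnitySums

section TrigonometricSums

theorem exp_neg_two_mul_I_sub_one (x : ℂ) :
    Complex.exp (-(2 * x * Complex.I)) - 1 =
      -(2 * Complex.I * Complex.sin x * Complex.exp (-(x * Complex.I))) := by
  have exp_double : Complex.exp (-(2 * x * Complex.I)) =
      Complex.exp (-(x * Complex.I)) * Complex.exp (-(x * Complex.I)) := by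
    rw [← Complex.exp_add]
    ring_nf
  have exp_cancel : Complex.exp (x * Complex.I) * Complex.exp (-(x * Complex.I)) = 1 := by
    rw [← Complex.exp_add, add_neg_cancel, Complex.exp_zero]
  rw [exp_double, Complex.sin, neg_mul]
  linear_combination exp_cancel + (Complex.exp (-(x * Complex.I)) -
    Complex.exp (x * Complex.I)) * Complex.exp (-(x * Complex.I)) * Complex.I_sq

theorem exp_neg_two_mul_I_eq_one_iff (x : ℝ) :
    Complex.exp (-(2 * x * Complex.I)) = 1 ↔ sin x = 0 := by
  rw [← sub_eq_zero, exp_neg_two_mul_I_sub_one, ← Complex.ofReal_sin]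
  simp [-Complex.ofReal_sin]

theorem exp_neg_two_mul_I_pow_eq_one_iff (x : ℝ) (n : ℕ) :
    Complex.exp (-(2 * x * Complex.I)) ^ n = 1 ↔ sin (n * x) = 0 := by
  rw [← exp_neg_two_mul_I_eq_one_iff, ← Complex.exp_nat_mul]
  push_cast
  ring_nf

theorem cos_sub_two_mul_mul_natCast (x y : ℝ) (k : ℕ) :
    cos (y - 2 * x * k) =
      (Complex.exp (y * Complex.I) * Complex.exp (-(2 * x * Complex.I)) ^ k).re := by
  rw [← Complex.exp_nat_mul, ← Complex.exp_add, ← Complex.exp_ofReal_mul_I_re]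
  push_cast
  ring_nf

variable {n : ℕ} {x : ℝ}

theorem sum_range_cos_sub_eq_zero (hx : sin x ≠ 0) (hnx : sin (n * x) = 0) (y : ℝ) :
    ∑ k ∈ Finset.range n, cos (y - 2 * x * k) = 0 := by
  simp only [cos_sub_two_mul_mul_natCast]
  rw [← Complex.re_sum, ← Finset.mul_sum,
    sum_range_pow_eq_zero_of_pow_eq_one ((exp_neg_two_mul_I_eq_one_iff x).not.2 hx)
      ((exp_neg_two_mul_I_pow_eq_one_iff x n).2 hnx), mul_zero, Complex.zero_re]

theorem sum_range_natCast_mul_cos_sub (hx : sin x ≠ 0) (hnx : sin (n * x) = 0) (y : ℝ) :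
    ∑ k ∈ Finset.range n, k * cos (y - 2 * x * k) = -(n / (2 * sin x)) * sin (y + x) := by
  have hsin : Complex.sin x ≠ 0 := mod_cast hx
  have polar_form : Complex.exp (y * Complex.I) * (n / (Complex.exp (-(2 * x * Complex.I)) - 1)) =
      ((n / (2 * sin x) : ℝ) : ℂ) * (Complex.I * Complex.exp ((y + x : ℝ) * Complex.I)) := by
    rw [exp_neg_two_mul_I_sub_one, Complex.exp_neg]
    push_cast
    rw [add_mul, Complex.exp_add]
    field_simp
    simp
  calc ∑ k ∈ Finset.range n, k * cos (y - 2 * x * k)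
      = (Complex.exp (y * Complex.I) *
          ∑ k ∈ Finset.range n, (k : ℂ) * Complex.exp (-(2 * x * Complex.I)) ^ k).re := by
        rw [Finset.mul_sum, Complex.re_sum]
        refine Finset.sum_congr rfl fun k _ => ?_
        rw [cos_sub_two_mul_mul_natCast, mul_left_comm, ← Complex.ofReal_natCast,
          Complex.re_ofReal_mul]
    _ = (((n / (2 * sin x) : ℝ) : ℂ) *
          (Complex.I * Complex.exp ((y + x : ℝ) * Complex.I))).re := by
        rw [sum_range_natCast_mul_pow_of_pow_eq_one ((exp_neg_two_mul_I_eq_one_iff x).not.2 hx)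
          ((exp_neg_two_mul_I_pow_eq_one_iff x n).2 hnx), polar_form]
    _ = -(n / (2 * sin x)) * sin (y + x) := by
        rw [Complex.re_ofReal_mul, Complex.I_mul_re, Complex.exp_ofReal_mul_I_im, mul_neg, neg_mul]

end TrigonometricSums

section Sinusoid

theorem image_Ico_eq_range_of_periodic {α β : Type*} [AddCommGroup α] [LinearOrder α]
    [IsOrderedAddMonoid α] [Archimedean α] {f : α → β} {c : α} (hf : Function.Periodic f c)
    (hc : 0 < c) (a : α) : f '' Set.Ico a (a + c) = Set.range f := by
  refine (Set.image_subset_range _ _).antisymm (Set.range_subset_iff.2 fun t => ?_)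
  obtain ⟨y, hy, hty⟩ := hf.exists_mem_Ico hc t a
  exact ⟨y, hy, hty.symm⟩

theorem isLeast_range_mul_sin_add (c x : ℝ) :
    IsLeast (Set.range fun y => c * sin (y + x)) (-|c|) := by
  constructor
  · rcases le_total 0 c with hc | hc
    · exact ⟨-(π / 2) - x, by simp [abs_of_nonneg hc]⟩
    · exact ⟨π / 2 - x, by simp [abs_of_nonpos hc]⟩
  · rintro _ ⟨y, rfl⟩
    refine neg_le_of_abs_le ?_
    rw [abs_mul]
    exact mul_le_of_le_one_right (abs_nonneg c) (abs_sin_le_one _)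

theorem sInf_mul_sin_add_image_Ico (c x : ℝ) :
    sInf ((fun y => c * sin (y + x)) '' Set.Ico 0 (2 * π)) = -|c| := by
  have periodic : Function.Periodic (fun y => c * sin (y + x)) (2 * π) := fun y => by
    simp only [add_right_comm y, sin_add_two_pi]
  rw [← zero_add (2 * π), image_Ico_eq_range_of_periodic periodic two_pi_pos]
  exact (isLeast_range_mul_sin_add c x).csInf_eq

theorem sin_le_sin_iff_abs_sub_pi_div_two_le {x y : ℝ} (hx : x ∈ Set.Icc 0 π)
    (hy : y ∈ Set.Icc 0 π) : sin y ≤ sin x ↔ |x - π / 2| ≤ |y - π / 2| := by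
  have abs_mem {t : ℝ} (ht : t ∈ Set.Icc 0 π) : |t - π / 2| ∈ Set.Icc 0 π :=
    ⟨abs_nonneg _, abs_le.2 ⟨by linarith [ht.1, pi_pos], by linarith [ht.2, pi_pos]⟩⟩
  rw [← cos_sub_pi_div_two x, ← cos_sub_pi_div_two y, ← cos_abs (x - _), ← cos_abs (y - _)]
  exact strictAntiOn_cos.le_iff_ge (abs_mem hy) (abs_mem hx)

end Sinusoid

section Loss

variable {K : ℕ} {T b a x y : ℝ}

theorem Jfun_eq_mul_sin_add (hx : sin x ≠ 0) (hKx : sin (K * x) = 0) :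
    Jfun K T b a x y = -(a * T * K / (2 * sin x)) * sin (y + x) := by
  calc Jfun K T b a x y
      = b * ∑ k ∈ Finset.range K, cos (y - 2 * x * k) +
          a * T * ∑ k ∈ Finset.range K, k * cos (y - 2 * x * k) := by
        rw [Jfun, Finset.mul_sum, Finset.mul_sum, ← Finset.sum_add_distrib]
        exact Finset.sum_congr rfl fun k _ => by ring
    _ = -(a * T * K / (2 * sin x)) * sin (y + x) := by
        rw [sum_range_cos_sub_eq_zero hx hKx, sum_range_natCast_mul_cos_sub hx hKx]
        ring

theorem Lfun_eq_abs_div (hK : K ≠ 0) (hc : 0 < b + a * T * ((K : ℝ) - 1) / 2) (hx : sin x ≠ 0)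
    (hKx : sin (K * x) = 0) :
    Lfun K T b a x = |(a * T / 2) / ((b + a * T * ((K : ℝ) - 1) / 2) * sin x)| := by
  have hK_pos : (0 : ℝ) < K := mod_cast hK.bot_lt
  simp only [Lfun, Jfun_eq_mul_sin_add hx hKx]
  rw [sInf_mul_sin_add_image_Ico, neg_neg, abs_neg, ← abs_of_pos (mul_pos hc hK_pos), ← abs_div]
  congr 1
  generalize b + a * T * ((K : ℝ) - 1) / 2 = c₁ at hc ⊢
  field_simp

theorem Lfun_le_Lfun_iff (hK : K ≠ 0) (haT : a * T ≠ 0)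
    (hc : 0 < b + a * T * ((K : ℝ) - 1) / 2) (hx : x ∈ Set.Ioo 0 π) (hKx : sin (K * x) = 0)
    (hy : y ∈ Set.Ioo 0 π) (hKy : sin (K * y) = 0) :
    Lfun K T b a x ≤ Lfun K T b a y ↔ |x - π / 2| ≤ |y - π / 2| := by
  have hsx : 0 < sin x := sin_pos_of_mem_Ioo hx
  have hsy : 0 < sin y := sin_pos_of_mem_Ioo hy
  have hnum : 0 < |a * T / 2| := abs_pos.2 (div_ne_zero haT two_ne_zero)
  rw [Lfun_eq_abs_div hK hc hsx.ne' hKx, Lfun_eq_abs_div hK hc hsy.ne' hKy,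
    abs_div (a * T / 2), abs_div (a * T / 2),
    abs_of_pos (mul_pos hc hsx), abs_of_pos (mul_pos hc hsy),
    div_le_div_iff_of_pos_left hnum (mul_pos hc hsx) (mul_pos hc hsy),
    mul_le_mul_iff_right₀ hc,
    sin_le_sin_iff_abs_sub_pi_div_two_le (Set.Ioo_subset_Icc_self hx) (Set.Ioo_subset_Icc_self hy)]

end Loss

section Astar

variable {K : ℕ} {T α : ℝ}

theorem ne_zero_of_mem_Astar (hα : α ∈ Astar K T) : K ≠ 0 := by
  obtain ⟨q, hq_one, hq_le, -⟩ := hα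
  lia

theorem exists_mul_div_two_eq_of_mem_Astar (hT : T ≠ 0) (hα : α ∈ Astar K T) :
    ∃ q : ℤ, 0 < q ∧ q < K ∧ α * T / 2 = q * π / K := by
  obtain ⟨q, hq_one, hq_le, rfl⟩ := hα
  exact ⟨q, by lia, by lia, by field_simp⟩

theorem mul_div_two_mem_Ioo_of_mem_Astar (hT : T ≠ 0) (hα : α ∈ Astar K T) :
    α * T / 2 ∈ Set.Ioo 0 π := by
  obtain ⟨q, hq_pos, hq_lt, hq⟩ := exists_mul_div_two_eq_of_mem_Astar hT hα
  have hq_pos' : (0 : ℝ) < q := mod_cast hq_pos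
  have hq_lt' : (q : ℝ) < K := mod_cast hq_lt
  have hK_pos : (0 : ℝ) < K := hq_pos'.trans hq_lt'
  rw [hq]
  refine ⟨by positivity, ?_⟩
  rw [div_lt_iff₀ hK_pos, mul_comm π]
  exact mul_lt_mul_of_pos_right hq_lt' pi_pos

theorem sin_mul_eq_zero_of_mem_Astar (hT : T ≠ 0) (hα : α ∈ Astar K T) :
    sin (K * (α * T / 2)) = 0 := by
  obtain ⟨q, -, -, hq⟩ := exists_mul_div_two_eq_of_mem_Astar hT hα
  have hK : (K : ℝ) ≠ 0 := mod_cast ne_zero_of_mem_Astar hα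
  rw [hq, mul_div_cancel₀ _ hK, sin_int_mul_pi]

end Astar

-- The mean of the affine weights is the average of the first and the last one.
theorem mean_weight_pos {K : ℕ} (hK : K ≠ 0) {T b a : ℝ}
    (hpos : ∀ k, k < K → 0 < b + a * k * T) : 0 < b + a * T * ((K : ℝ) - 1) / 2 := by
  have first_pos := hpos 0 (by lia)
  have last_pos := hpos (K - 1) (by lia)
  rw [Nat.cast_pred hK.bot_lt] at last_pos
  rw [Nat.cast_zero] at first_pos
  linarith

theorem stmt_19_general (K : ℕ) (T b a : ℝ) (hT : T ≠ 0) (ha : a ≠ 0)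
    (hc : 0 < b + a * T * ((K : ℝ) - 1) / 2) :
    (∀ α ∈ Astar K T,
      Lfun K T b a (α * T / 2) =
        |(a * T / 2) / ((b + a * T * ((K : ℝ) - 1) / 2) * Real.sin (α * T / 2))|) ∧
    {α ∈ Astar K T | ∀ β ∈ Astar K T,
        Lfun K T b a (α * T / 2) ≤ Lfun K T b a (β * T / 2)} =
      {α ∈ Astar K T | ∀ β ∈ Astar K T,
        |α * T / 2 - π / 2| ≤ |β * T / 2 - π / 2|} := by
  constructor
  · intro α hα
    have hsin : 0 < sin (α * T / 2) := sin_pos_of_mem_Ioo (mul_div_two_mem_Ioo_of_mem_Astar hT hα)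
    exact Lfun_eq_abs_div (ne_zero_of_mem_Astar hα) hc hsin.ne' (sin_mul_eq_zero_of_mem_Astar hT hα)
  · ext α
    refine and_congr_right fun hα => forall₂_congr fun β hβ => ?_
    exact Lfun_le_Lfun_iff (ne_zero_of_mem_Astar hα) (mul_ne_zero ha hT) hc
      (mul_div_two_mem_Ioo_of_mem_Astar hT hα) (sin_mul_eq_zero_of_mem_Astar hT hα)
      (mul_div_two_mem_Ioo_of_mem_Astar hT hβ) (sin_mul_eq_zero_of_mem_Astar hT hβ)

theorem stmt_19 (K : ℕ) (hK : 2 ≤ K) (T b a : ℝ) (hT : 0 < T) (hb : 0 < b)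
    (ha : a ≠ 0) (hpos : ∀ k, k < K → 0 < b + a * k * T) :
    (∀ α ∈ Astar K T,
      Lfun K T b a (α * T / 2) =
        |(a * T / 2) / ((b + a * T * ((K : ℝ) - 1) / 2) * Real.sin (α * T / 2))|) ∧
    {α ∈ Astar K T | ∀ β ∈ Astar K T,
        Lfun K T b a (α * T / 2) ≤ Lfun K T b a (β * T / 2)} =
      {α ∈ Astar K T | ∀ β ∈ Astar K T,
        |α * T / 2 - π / 2| ≤ |β * T / 2 - π / 2|} :=
  stmt_19_general K T b a hT.ne' ha (mean_weight_pos (by lia) hpos)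
end
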